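/- Let K be a nonempty compact topological space and let p > 1 be a real number. For any continuous functions u, φ : K → ℝ, the one-sided limit lim_{ε→0⁺} (‖u + εφ‖_∞^p − ‖u‖_∞^p)/ε exists and equals p · max{ |u(x)|^{p−2}u(x)·φ(x) : x ∈ K, |u(x)| = ‖u‖_∞ }. -/

import Mathlib

open Filter Set
noncomputable section

theorem continuous_abs_rpow_sub_two_mul {p : ℝ} (hp : 1 < p) :
    Continuous fun t : ℝ => |t| ^ (p - 2) * t := by
  have hd : deriv (fun t : ℝ => |t| ^ p) = fun t => p * |t| ^ (p - 2) * t :=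
    funext fun t => (hasDerivAt_abs_rpow t hp).deriv
  have hc : Continuous fun t : ℝ => p * |t| ^ (p - 2) * t :=
    hd ▸ (contDiff_norm_rpow (E := ℝ) hp).continuous_deriv le_rfl
  have hp0 : p ≠ 0 := by positivity
  refine (hc.const_mul p⁻¹).congr fun t => ?_
  field_simp

theorem convexOn_abs_rpow {p : ℝ} (hp : 1 ≤ p) : ConvexOn ℝ univ fun t : ℝ => |t| ^ p := by
  refine ⟨convex_univ, fun x _ y _ a b ha hb hab => ?_⟩
  have hmono : |a • x + b • y| ≤ a • |x| + b • |y| := by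
    simpa [abs_mul, abs_of_nonneg ha, abs_of_nonneg hb] using abs_add_le (a * x) (b * y)
  exact (Real.rpow_le_rpow (abs_nonneg _) hmono (by linarith)).trans
    ((convexOn_rpow hp).2 (abs_nonneg x) (abs_nonneg y) ha hb hab)

/-- The graph of `t ↦ |t| ^ p` lies above its tangent lines. -/
theorem abs_rpow_add_le_abs_rpow {p : ℝ} (hp : 1 < p) (s t : ℝ) :
    |t| ^ p + p * (|t| ^ (p - 2) * t) * (s - t) ≤ |s| ^ p := by
  have hd := hasDerivAt_abs_rpow t hp
  rcases lt_trichotomy t s with h | rfl | h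
  · have := (convexOn_abs_rpow hp.le).le_slope_of_hasDerivAt (mem_univ t) (mem_univ s) h hd
    rw [slope_def_field, le_div_iff₀ (sub_pos.2 h)] at this
    linarith
  · simp
  · have := (convexOn_abs_rpow hp.le).slope_le_of_hasDerivAt (mem_univ s) (mem_univ t) h hd
    rw [slope_def_field, div_le_iff₀ (sub_pos.2 h)] at this
    linarith

theorem Continuous.exists_sSup_range_eq {K : Type*} [TopologicalSpace K] [CompactSpace K]
    [Nonempty K] {f : K → ℝ} (hf : Continuous f) :
    ∃ x, sSup (range f) = f x ∧ ∀ y, f y ≤ f x := by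
  simpa using isCompact_univ.exists_sSup_image_eq_and_ge univ_nonempty hf.continuousOn

/-- One-sided derivative of the `p`-th power of the sup norm: for continuous `u, φ` on a
nonempty compact space `K`,
`lim_{ε→0⁺} (‖u+εφ‖_∞^p − ‖u‖_∞^p)/ε = p·max{|u x|^{p-2} u x · φ x : |u x| = ‖u‖_∞}`. -/
theorem supnorm_pow_one_sided_deriv {K : Type*} [TopologicalSpace K] [CompactSpace K]
    [Nonempty K] (p : ℝ) (hp : 1 < p)
    (u φ : K → ℝ) (hu : Continuous u) (hφ : Continuous φ) :
    Tendsto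
      (fun ε : ℝ =>
        ((sSup (range fun x => |u x + ε * φ x|)) ^ p
          - (sSup (range fun x => |u x|)) ^ p) / ε)
      (nhdsWithin 0 (Ioi 0))
      (nhds (p * sSup { v : ℝ | ∃ x : K, |u x| = sSup (range fun y => |u y|) ∧
        v = |u x| ^ (p - 2) * u x * φ x })) := by
  have hG := continuous_abs_rpow_sub_two_mul hp
  obtain ⟨y, hy, hymax⟩ := hu.abs.exists_sSup_range_eq
  simp only [hy]
  have hA : IsCompact {x | |u x| = |u y|} :=
    (isClosed_eq hu.abs continuous_const).isCompact
  have hF : Continuous fun x => |u x| ^ (p - 2) * u x * φ x := (hG.comp hu).mul hφ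
  obtain ⟨z, hz, hzS, hzmax⟩ := hA.exists_sSup_image_eq_and_ge ⟨y, rfl⟩ hF.continuousOn
  have himage : {v : ℝ | ∃ x : K, |u x| = |u y| ∧ v = |u x| ^ (p - 2) * u x * φ x} =
      (fun x => |u x| ^ (p - 2) * u x * φ x) '' {x | |u x| = |u y|} := by
    ext v
    simp [eq_comm]
  rw [himage, hzS]
  rw [mem_ofPred_eq] at hz
  have hw (ε : ℝ) := (show Continuous fun x => |u x + ε * φ x| by fun_prop).exists_sSup_range_eq
  refine tendsto_order.2 ⟨fun a ha => ?_, fun b hb => ?_⟩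
  · filter_upwards [self_mem_nhdsWithin] with ε (hε : 0 < ε)
    obtain ⟨x, hx, hxmax⟩ := hw ε
    rw [hx]
    refine ha.trans_le ((le_div_iff₀ hε).2 ?_)
    have htangent := abs_rpow_add_le_abs_rpow hp (u z + ε * φ z) (u z)
    have hpow := Real.rpow_le_rpow (abs_nonneg _) (hxmax z) (by positivity : 0 ≤ p)
    rw [← hz]
    linarith
  · have hnear : ∀ᶠ ε in nhds (0 : ℝ), ∀ x ∈ (univ : Set K),
        |u y + ε * φ y| ≤ |u x + ε * φ x| →
          p * (|u x + ε * φ x| ^ (p - 2) * (u x + ε * φ x) * φ x) < b := by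
      refine isCompact_univ.eventually_forall_of_forall_eventually fun x _ => ?_
      rcases (hymax x).lt_or_eq with hlt | heq
      · have hopen : IsOpen {q : ℝ × K | |u q.2 + q.1 * φ q.2| < |u y + q.1 * φ y|} :=
          isOpen_lt (by fun_prop) (by fun_prop)
        filter_upwards [hopen.mem_nhds (by simpa using hlt)] with q hq hle
        exact absurd hq hle.not_gt
      · have hFq : Continuous fun q : ℝ × K =>
            p * (|u q.2 + q.1 * φ q.2| ^ (p - 2) * (u q.2 + q.1 * φ q.2) * φ q.2) :=
          ((hG.comp (show Continuous fun q : ℝ × K => u q.2 + q.1 * φ q.2 by fun_prop)).mul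
            (hφ.comp continuous_snd)).const_mul p
        have hlt : p * (|u x| ^ (p - 2) * u x * φ x) < b :=
          (mul_le_mul_of_nonneg_left (hzmax x heq) (by positivity)).trans_lt hb
        filter_upwards [(isOpen_lt hFq continuous_const).mem_nhds (by simpa using hlt)]
          with q hq _ using hq
    filter_upwards [self_mem_nhdsWithin, nhdsWithin_le_nhds hnear] with ε (hε : 0 < ε) hlt
    obtain ⟨x, hx, hxmax⟩ := hw ε
    rw [hx]
    refine lt_of_le_of_lt ((div_le_iff₀ hε).2 ?_) (hlt x (mem_univ x) (hxmax y))
    have htangent := abs_rpow_add_le_abs_rpow hp (u x) (u x + ε * φ x)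
    have hpow := Real.rpow_le_rpow (abs_nonneg _) (hymax x) (by positivity : 0 ≤ p)
    linarith
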